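/- Let G and G' be two finitely generated virtually free groups. Suppose that G is rigid and that G and G' are ∀∃-equivalent. Then there exists an injective group homomorphism from G into G'. -/

import Mathlib

open FirstOrder Language

/-- Function symbols of the first-order language of groups:
a binary multiplication, a unary inverse and a constant for the identity. -/
inductive GroupFunc : ℕ → Type
  | mul : GroupFunc 2
  | inv : GroupFunc 1
  | one : GroupFunc 0

/-- The first-order language of groups. -/
def groupLang : FirstOrder.Language :=
  { Functions := GroupFunc
    Relations := fun _ => Empty }

/-- Every group is a structure for the language of groups in the natural way. -/
instance groupLangStructure (G : Type*) [Group G] : groupLang.Structure G where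
  funMap {n} f v :=
    match f with
    | .mul => v 0 * v 1
    | .inv => (v 0)⁻¹
    | .one => 1
  RelMap {n} r _ := r.elim

/-- Existential formulas: iterated existential quantifications of a
quantifier-free formula. -/
inductive IsExistentialQF {α : Type*} : ∀ {n : ℕ}, groupLang.BoundedFormula α n → Prop
  | of_isQF {n : ℕ} {φ : groupLang.BoundedFormula α n} (h : φ.IsQF) : IsExistentialQF φ
  | ex {n : ℕ} {φ : groupLang.BoundedFormula α (n + 1)} (h : IsExistentialQF φ) :
      IsExistentialQF φ.ex

/-- Universal formulas: iterated universal quantifications of a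
quantifier-free formula. -/
inductive IsUniversalQF {α : Type*} : ∀ {n : ℕ}, groupLang.BoundedFormula α n → Prop
  | of_isQF {n : ℕ} {φ : groupLang.BoundedFormula α n} (h : φ.IsQF) : IsUniversalQF φ
  | all {n : ℕ} {φ : groupLang.BoundedFormula α (n + 1)} (h : IsUniversalQF φ) :
      IsUniversalQF φ.all

/-- ∀∃-formulas: iterated universal quantifications of an existential formula. -/
inductive IsAE {α : Type*} : ∀ {n : ℕ}, groupLang.BoundedFormula α n → Prop
  | of_existential {n : ℕ} {φ : groupLang.BoundedFormula α n} (h : IsExistentialQF φ) : IsAE φ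
  | all {n : ℕ} {φ : groupLang.BoundedFormula α (n + 1)} (h : IsAE φ) : IsAE φ.all

/-- A group is virtually free if it has a free subgroup of finite index. -/
def VirtuallyFree (G : Type*) [Group G] : Prop :=
  ∃ H : Subgroup G, H.FiniteIndex ∧ Nonempty (IsFreeGroup H)

/-- A group is co-Hopfian if every injective endomorphism is surjective. -/
def CoHopfian (G : Type*) [Group G] : Prop :=
  ∀ φ : G →* G, Function.Injective φ → Function.Surjective φ

/-- Two homomorphisms `φ, φ' : G → G'` are equivalent if they coincide up to
conjugation on every finite subgroup of `G`. -/
def HomEquiv {G G' : Type*} [Group G] [Group G'] (φ φ' : G →* G') : Prop :=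
  ∀ H : Subgroup G, (H : Set G).Finite →
    ∃ g' : G', ∀ h ∈ H, φ' h = g' * φ h * g'⁻¹

/-- Two groups are ∀∃-equivalent if they satisfy the same ∀∃-sentences. -/
def AEEquivalent (G : Type*) (G' : Type*) [Group G] [Group G'] : Prop :=
  ∀ φ : groupLang.Sentence, IsAE φ → (G ⊨ φ ↔ G' ⊨ φ)

/-- Two groups are ∃-equivalent if they satisfy the same existential sentences. -/
def ExistentiallyEquivalent (G : Type*) (G' : Type*) [Group G] [Group G'] : Prop :=
  ∀ φ : groupLang.Sentence, IsExistentialQF φ → (G ⊨ φ ↔ G' ⊨ φ)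

/-- An endomorphism is rigid-testing: `G` is rigid if every endomorphism
equivalent to the identity is an automorphism. -/
def Rigid (G : Type*) [Group G] : Prop :=
  ∀ φ : G →* G, HomEquiv φ (MonoidHom.id G) → Function.Bijective φ

/-- `Out G` is finite, expressed as: the inner automorphisms form a finite index
subgroup of `Aut G`. -/
def OutFinite (G : Type*) [Group G] : Prop :=
  (MulAut.conj : G →* MulAut G).range.FiniteIndex

/-- Iterated composition of an endomorphism. -/
def homPow {G : Type*} [Group G] (φ : G →* G) : ℕ → (G →* G)
  | 0 => MonoidHom.id G
  | n + 1 => φ.comp (homPow φ n)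

/-- An endomorphism `φ` of `G` is class-permuting if some positive power of `φ`
is equivalent to the identity of `G`. -/
def ClassPermuting {G : Type*} [Group G] (φ : G →* G) : Prop :=
  ∃ n : ℕ, 1 ≤ n ∧ HomEquiv (homPow φ n) (MonoidHom.id G)

/-- A maximal finite subgroup: a finite subgroup maximal with respect to
inclusion among finite subgroups. -/
def MaximalFiniteSubgroup {G : Type*} [Group G] (A : Subgroup G) : Prop :=
  (A : Set G).Finite ∧ ∀ B : Subgroup G, (B : Set G).Finite → A ≤ B → A = B

/-- Two subgroups are conjugate. -/
def SubgroupConj {G : Type*} [Group G] (A B : Subgroup G) : Prop :=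
  ∃ g : G, B = A.map (MulAut.conj g).toMonoidHom

/-- A group is strongly co-Hopfian if there is a finite subset `F` of
`G \ {1}` such that every endomorphism whose kernel misses `F` is an
automorphism. -/
def StronglyCoHopfian (G : Type*) [Group G] : Prop :=
  ∃ F : Finset G, (1 : G) ∉ F ∧
    ∀ φ : G →* G, (∀ f ∈ F, φ f ≠ 1) → Function.Bijective φ

/-- A group is finitely presented. -/
def GroupFinitelyPresented (G : Type*) [Group G] : Prop :=
  ∃ (n : ℕ) (rels : Finset (FreeGroup (Fin n))),
    Nonempty (PresentedGroup (rels : Set (FreeGroup (Fin n))) ≃* G)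

/-- A free group which is finitely generated has a finite basis. -/
theorem finite_of_fg_freeGroup {X : Type*} (h : Group.FG (FreeGroup X)) : Finite X := by
  classical
  by_contra hX
  rw [not_finite_iff_infinite] at hX
  obtain ⟨S, hS⟩ := Group.fg_def.1 h
  let U : Finset X := S.biUnion fun w => (w.toWord.map Prod.fst).toFinset
  obtain ⟨x, hx⟩ := Infinite.exists_notMem_finset U
  let f : FreeGroup X →* Multiplicative ℤ :=
    FreeGroup.lift fun y => if y = x then Multiplicative.ofAdd 1 else 1
  have h1 : f = 1 := by
    apply MonoidHom.eq_of_eqOn_dense hS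
    intro w hw
    have hw' : ∀ p ∈ w.toWord, p.1 ≠ x := by
      rintro p hp rfl
      apply hx
      simp only [U, Finset.mem_biUnion]
      exact ⟨w, hw, List.mem_toFinset.2 (List.mem_map_of_mem hp)⟩
    rw [← FreeGroup.mk_toWord (x := w)]
    simp only [f, FreeGroup.lift_mk, MonoidHom.one_apply]
    apply List.prod_eq_one
    intro z hz
    obtain ⟨p, hp, rfl⟩ := List.mem_map.1 hz
    simp [hw' p hp]
  have h2 := DFunLike.congr_fun h1 (FreeGroup.of x)
  simp only [f, FreeGroup.lift_apply_of, if_true, MonoidHom.one_apply] at h2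
  exact absurd h2 (by decide)

/-- A finitely generated virtually free group has a normal free subgroup of finite index and
finite rank. -/
theorem vf_structure (G : Type*) [Group G] (hfg : Group.FG G) (hvf : VirtuallyFree G) :
    ∃ N : Subgroup G, N.Normal ∧ N.FiniteIndex ∧
      ∃ n : ℕ, Nonempty (FreeGroup (Fin n) ≃* N) := by
  obtain ⟨H, hH, ⟨hfree⟩⟩ := hvf
  have hfree' : IsFreeGroup (H.normalCore) :=
    IsFreeGroup.ofMulEquiv (Subgroup.subgroupOfEquivOfLe (Subgroup.normalCore_le H))
  have hfgN : Group.FG H.normalCore := inferInstance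
  refine ⟨H.normalCore, inferInstance, inferInstance, ?_⟩
  have e := IsFreeGroup.mulEquiv H.normalCore
  have hfin : Finite (IsFreeGroup.Generators H.normalCore) := by
    apply finite_of_fg_freeGroup
    exact Group.fg_of_surjective (f := e.symm.toMonoidHom) e.symm.surjective
  obtain ⟨n, ⟨ε⟩⟩ := Finite.exists_equiv_fin (IsFreeGroup.Generators H.normalCore)
  exact ⟨n, ⟨(FreeGroup.freeGroupCongr ε.symm).trans e⟩⟩

/-- Finite presentability of virtually free groups, in the form that is needed. -/
theorem vf_presentation (G : Type*) (G' : Type*) [Group G] [Group G'] (hfg : Group.FG G)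
    (hvf : VirtuallyFree G) :
    ∃ (n : ℕ) (a : Fin n → G) (R : Set (FreeGroup (Fin n))), R.Finite ∧
      Function.Surjective (FreeGroup.lift a) ∧ (∀ w ∈ R, FreeGroup.lift a w = 1) ∧
      ∀ x : Fin n → G', (∀ w ∈ R, FreeGroup.lift x w = 1) →
        ∃ φ : G →* G', ∀ i, φ (a i) = x i := by
  suffices hs : ∃ (ι : Type _) (_ : Finite ι) (a : ι → G) (R : Set (FreeGroup ι)), R.Finite ∧
      Function.Surjective (FreeGroup.lift a) ∧ (∀ w ∈ R, FreeGroup.lift a w = 1) ∧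
      ∀ x : ι → G', (∀ w ∈ R, FreeGroup.lift x w = 1) →
        ∃ φ : G →* G', ∀ i, φ (a i) = x i by
    obtain ⟨ι, hι, a, R, hR, ha, hRa, hx⟩ := hs
    obtain ⟨n, ⟨ε⟩⟩ := Finite.exists_equiv_fin ι
    have key : ∀ {M : Type _} [Group M] (x : Fin n → M) (w : FreeGroup ι),
        FreeGroup.lift x (FreeGroup.map ε w) = FreeGroup.lift (x ∘ ε) w := by
      intro M _ x w
      have : (FreeGroup.lift x).comp (FreeGroup.map ε) = FreeGroup.lift (x ∘ ε) := by
        ext i; simp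
      exact DFunLike.congr_fun this w
    have key' : ∀ (x : Fin n → G') (w : FreeGroup ι),
        FreeGroup.lift x (FreeGroup.map ε w) = FreeGroup.lift (x ∘ ε) w := by
      intro x w
      have : (FreeGroup.lift x).comp (FreeGroup.map ε) = FreeGroup.lift (x ∘ ε) := by
        ext i; simp
      exact DFunLike.congr_fun this w
    have hae : (a ∘ ε.symm) ∘ ε = a := by ext i; simp
    refine ⟨n, a ∘ ε.symm, FreeGroup.map ε '' R, hR.image _, ?_, ?_, ?_⟩
    · intro g
      obtain ⟨w, rfl⟩ := ha g
      exact ⟨FreeGroup.map ε w, by rw [key, hae]⟩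
    · rintro _ ⟨w, hw, rfl⟩
      rw [key, hae]; exact hRa w hw
    · intro x hxR
      obtain ⟨φ, hφ⟩ := hx (x ∘ ε) (fun w hw => by
        rw [← key']; exact hxR _ ⟨w, hw, rfl⟩)
      exact ⟨φ, fun i => by simpa using hφ (ε.symm i)⟩
  obtain ⟨N, hN, hFI, n, ⟨e⟩⟩ := vf_structure G hfg hvf
  let σ : G ⧸ N → G := Quotient.out
  have hσ : ∀ q : G ⧸ N, (σ q : G ⧸ N) = q := fun q => QuotientGroup.out_eq' q
  have hmem : ∀ {g h : G}, (g : G ⧸ N) = (h : G ⧸ N) → g * h⁻¹ ∈ N := by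
    intro g h hgh
    rw [← QuotientGroup.eq_one_iff]
    simp [hgh]
  let a : Fin n ⊕ (G ⧸ N) → G := Sum.elim (fun i => (e (FreeGroup.of i) : G)) σ
  let W : N →* FreeGroup (Fin n ⊕ (G ⧸ N)) := (FreeGroup.map Sum.inl).comp e.symm.toMonoidHom
  have hW : ∀ m : N, FreeGroup.lift a (W m) = m := by
    intro m
    have : ((FreeGroup.lift a).comp (FreeGroup.map Sum.inl)) = N.subtype.comp e.toMonoidHom := by
      ext i; simp [a]
    have h2 := DFunLike.congr_fun this (e.symm m)
    simpa [W] using h2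
  have hc1 : ∀ (q : G ⧸ N) (m : N), σ q * m * (σ q)⁻¹ ∈ N := fun q m => hN.conj_mem _ m.2 _
  have hc2 : ∀ q q' : G ⧸ N, σ q * σ q' * (σ (q * q'))⁻¹ ∈ N := fun q q' =>
    hmem (by simp [hσ])
  let r1 : (G ⧸ N) × Fin n → FreeGroup (Fin n ⊕ (G ⧸ N)) := fun p =>
    FreeGroup.of (Sum.inr p.1) * FreeGroup.of (Sum.inl p.2) * (FreeGroup.of (Sum.inr p.1))⁻¹ *
      (W ⟨_, hc1 p.1 (e (FreeGroup.of p.2))⟩)⁻¹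
  let r2 : (G ⧸ N) × (G ⧸ N) → FreeGroup (Fin n ⊕ (G ⧸ N)) := fun p =>
    FreeGroup.of (Sum.inr p.1) * FreeGroup.of (Sum.inr p.2) *
      (W ⟨_, hc2 p.1 p.2⟩ * FreeGroup.of (Sum.inr (p.1 * p.2)))⁻¹
  have hfinq : Finite (G ⧸ N) := inferInstance
  refine ⟨Fin n ⊕ (G ⧸ N), inferInstance, a, Set.range r1 ∪ Set.range r2,
    (Set.finite_range _).union (Set.finite_range _), ?_, ?_, ?_⟩
  · intro g
    refine ⟨W ⟨g * (σ (g : G ⧸ N))⁻¹, hmem (by simp [hσ])⟩ * FreeGroup.of (Sum.inr (g : G ⧸ N)), ?_⟩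
    rw [map_mul, hW]
    simp [a]
  · rintro w (⟨p, rfl⟩ | ⟨p, rfl⟩)
    · simp only [r1, map_mul, map_inv, hW]
      simp [a]
    · simp only [r2, map_mul, map_inv, hW]
      simp [a]
  · intro x hx
    let f : N →* G' := (FreeGroup.lift (fun i => x (Sum.inl i))).comp e.symm.toMonoidHom
    have hfW : ∀ m : N, FreeGroup.lift x (W m) = f m := by
      intro m
      have : ((FreeGroup.lift x).comp (FreeGroup.map Sum.inl)) =
          FreeGroup.lift (fun i : Fin n => x (Sum.inl i)) := by
        ext i; simp
      have h2 := DFunLike.congr_fun this (e.symm m)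
      simpa [W, f] using h2
    let y : G ⧸ N → G' := fun q => x (Sum.inr q)
    have hR2 : ∀ q q', y q * y q' = f ⟨_, hc2 q q'⟩ * y (q * q') := by
      intro q q'
      have := hx (r2 (q, q')) (Or.inr ⟨_, rfl⟩)
      simp only [r2, map_mul, map_inv, hfW, FreeGroup.lift_apply_of] at this
      exact mul_inv_eq_one.1 this
    have hR1 : ∀ (q : G ⧸ N) (m : N), y q * f m * (y q)⁻¹ = f ⟨_, hc1 q m⟩ := by
      intro q
      let cj : N →* N := (MulAut.conjNormal (σ q)).toMonoidHom
      have hcj : ∀ m : N, cj m = ⟨_, hc1 q m⟩ := fun m => by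
        apply Subtype.ext; simp [cj]
      have : (((MulAut.conj (y q)).toMonoidHom.comp f).comp e.toMonoidHom) =
          (f.comp cj).comp e.toMonoidHom := by
        ext i
        have := hx (r1 (q, i)) (Or.inl ⟨_, rfl⟩)
        simp only [r1, map_mul, map_inv, hfW, FreeGroup.lift_apply_of] at this
        have h3 := mul_inv_eq_one.1 this
        simp only [MonoidHom.comp_apply, MulEquiv.coe_toMonoidHom, MulAut.conj_apply, hcj]
        rw [← h3]
        simp [f, y]
      intro m
      have h4 := DFunLike.congr_fun this (e.symm m)
      simpa [hcj] using h4
    have hr : ∀ g : G, g * (σ (g : G ⧸ N))⁻¹ ∈ N := fun g => hmem (by simp [hσ])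
    let F : G → G' := fun g => f ⟨_, hr g⟩ * y g
    have hF : ∀ (m : N) (q : G ⧸ N), F (m * σ q) = f m * y q := by
      intro m q
      have hq : ((m * σ q : G) : G ⧸ N) = q := by
        rw [QuotientGroup.mk_mul, (QuotientGroup.eq_one_iff (m : G)).2 m.2, one_mul, hσ]
      simp only [F]
      congr 2
      · congr 1; simp only [hq]; group
    have hFmul : ∀ g h, F (g * h) = F g * F h := by
      intro g h
      have h1 : g * h = ((⟨_, hr g⟩ * ⟨_, hc1 g ⟨_, hr h⟩⟩ * ⟨_, hc2 g h⟩ : N) : G)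
          * σ (g * h : G ⧸ N) := by
        simp only [Subgroup.coe_mul]; group
      rw [h1, hF, map_mul, map_mul, ← hR1, mul_assoc _ (f ⟨_, hc2 g h⟩), ← hR2]
      simp [F, mul_assoc]
    refine ⟨MonoidHom.mk' F hFmul, ?_⟩
    have hF1 : F 1 = 1 := (MonoidHom.mk' F hFmul).map_one
    have hy : ∀ m : N, F m = f m := by
      intro m
      have h0 := hF (m * ⟨_, hr 1⟩) ((1 : G) : G ⧸ N)
      have h5 : F 1 = f ⟨_, hr 1⟩ * y ((1 : G) : G ⧸ N) := rfl
      rw [map_mul, mul_assoc, ← h5, hF1, mul_one] at h0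
      rw [← h0]; congr 1
      simp only [Subgroup.coe_mul]; group
    rintro (i | q)
    · simp only [a, Sum.elim_inl, MonoidHom.mk'_apply, hy]
      simp [f]
    · have := hF 1 q
      simpa [y, a] using this

/-! ### Finite subgroups of virtually free groups -/

/-- Two reduced words with distinct first letters: no cancellation in `a⁻¹ * b`. -/
theorem norm_le_of_head_ne {α : Type*} [DecidableEq α] (a b : FreeGroup α)
    (h : a.toWord.head? ≠ b.toWord.head?) : a.norm ≤ (a⁻¹ * b).norm := by
  have hred : FreeGroup.IsReduced (FreeGroup.invRev a.toWord ++ b.toWord) := by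
    unfold FreeGroup.IsReduced
    rw [List.isChain_append]
    refine ⟨?_, FreeGroup.isReduced_toWord, ?_⟩
    · rw [← FreeGroup.toWord_inv]; exact FreeGroup.isReduced_toWord
    · intro x hx y hy hxy
      rw [FreeGroup.invRev, List.getLast?_reverse] at hx
      by_contra hne
      apply h
      rw [Option.mem_def.1 hy]
      simp only [List.head?_map, Option.mem_def, Option.map_eq_some_iff] at hx
      obtain ⟨z, hz, rfl⟩ := hx
      rw [hz]
      congr 1
      refine Prod.ext hxy ?_
      revert hne
      cases z.2 <;> cases y.2 <;> simp
  have : (a⁻¹ * b).toWord = FreeGroup.invRev a.toWord ++ b.toWord := by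
    rw [FreeGroup.toWord_mul, FreeGroup.toWord_inv]; exact hred.reduce_eq
  simp [FreeGroup.norm, this]

/-- Initial segments of a reduced word. -/
theorem split_head_ne {α : Type*} [DecidableEq α] (w : FreeGroup α) (hw : w ≠ 1) (i : ℕ) :
    (FreeGroup.mk (w.toWord.take i))⁻¹.toWord.head? ≠
      ((FreeGroup.mk (w.toWord.take i))⁻¹ * w).toWord.head? := by
  have hl : FreeGroup.IsReduced w.toWord := FreeGroup.isReduced_toWord
  have h1 : (FreeGroup.mk (w.toWord.take i)).toWord = w.toWord.take i := by
    rw [FreeGroup.toWord_mk]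
    exact FreeGroup.IsReduced.reduce_eq (List.IsChain.take hl i)
  have h2 : ((FreeGroup.mk (w.toWord.take i))⁻¹ * w).toWord = w.toWord.drop i := by
    have : (FreeGroup.mk (w.toWord.take i))⁻¹ * w = FreeGroup.mk (w.toWord.drop i) := by
      rw [inv_mul_eq_iff_eq_mul, FreeGroup.mul_mk, List.take_append_drop, FreeGroup.mk_toWord]
    rw [this, FreeGroup.toWord_mk]
    exact FreeGroup.IsReduced.reduce_eq (List.IsChain.drop hl i)
  rw [FreeGroup.toWord_inv, h1, h2]
  have hne : w.toWord ≠ [] := by rwa [Ne, FreeGroup.toWord_eq_nil_iff]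
  have hl' := hl
  rw [← List.take_append_drop i w.toWord] at hl' hne
  generalize w.toWord.take i = l1 at *
  generalize w.toWord.drop i = l2 at *
  unfold FreeGroup.IsReduced at hl'
  rw [List.isChain_append] at hl'
  intro heq
  simp only [FreeGroup.invRev, List.head?_reverse, List.getLast?_map] at heq
  rcases l1.eq_nil_or_concat with rfl | ⟨l1', x, rfl⟩
  · simp at heq
    cases l2 <;> simp_all
  · simp at heq
    have := hl'.2.2 x (by simp) (x.1, !x.2) (by simp [← heq])
    simp at this

/-- A word length. -/
theorem exists_length (G : Type*) [Group G] (hfg : Group.FG G) :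
    ∃ (S : Set G) (len : G → ℕ), S.Finite ∧ len 1 = 0 ∧ (∀ g h, len (g * h) ≤ len g + len h) ∧
      (∀ g, len g⁻¹ = len g) ∧ (∀ n, {g | len g ≤ n}.Finite) ∧
      (∀ l : List G, (∀ s ∈ l, s ∈ S) → len l.prod ≤ l.length) ∧
      (∀ g, ∃ l : List G, (∀ s ∈ l, s ∈ S) ∧ l.prod = g ∧ l.length = len g) := by
  obtain ⟨S0, hS0⟩ := Group.fg_def.1 hfg
  let S : Set G := (S0 : Set G) ∪ (S0 : Set G)⁻¹
  have hSinv : ∀ s ∈ S, s⁻¹ ∈ S := by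
    rintro s (h | h)
    · exact Or.inr (by simpa using h)
    · exact Or.inl (by simpa using h)
  have hSfin : S.Finite := S0.finite_toSet.union S0.finite_toSet.inv
  let P : G → ℕ → Prop := fun g n => ∃ l : List G, (∀ s ∈ l, s ∈ S) ∧ l.prod = g ∧ l.length = n
  have hP : ∀ g, ∃ n, P g n := by
    intro g
    have hg : g ∈ Submonoid.closure S := by
      rw [← Subgroup.closure_toSubmonoid, hS0]; trivial
    obtain ⟨l, h1, h2⟩ := Submonoid.exists_list_of_mem_closure hg
    exact ⟨l.length, l, h1, h2, rfl⟩
  classical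
  let len : G → ℕ := fun g => Nat.find (hP g)
  have hlen : ∀ g, P g (len g) := fun g => Nat.find_spec (hP g)
  have hle : ∀ l : List G, (∀ s ∈ l, s ∈ S) → len l.prod ≤ l.length := fun l hl =>
    Nat.find_min' (hP _) ⟨l, hl, rfl, rfl⟩
  have hinv : ∀ g, len g⁻¹ ≤ len g := by
    intro g
    obtain ⟨l, h1, h2, h3⟩ := hlen g
    have := hle ((l.map (fun x => x⁻¹)).reverse) (by
      intro s hs
      simp only [List.mem_reverse, List.mem_map] at hs
      obtain ⟨t, ht, rfl⟩ := hs
      exact hSinv t (h1 t ht))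
    rw [← List.prod_inv_reverse, h2] at this
    simpa [h3] using this
  refine ⟨S, len, hSfin, ?_, ?_, ?_, ?_, hle, hlen⟩
  · simpa using hle [] (by simp)
  · intro g h
    obtain ⟨l, h1, h2, h3⟩ := hlen g
    obtain ⟨l', h1', h2', h3'⟩ := hlen h
    have := hle (l ++ l') (by
      intro s hs
      rcases List.mem_append.1 hs with hs | hs
      exacts [h1 s hs, h1' s hs])
    simpa [h2, h2', h3, h3'] using this
  · intro g
    refine le_antisymm (hinv g) ?_
    simpa using hinv g⁻¹
  · intro n
    have : Finite S := hSfin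
    have hf : ({l : List S | l.length ≤ n}).Finite := List.finite_length_le S n
    refine (hf.image (fun l : List S => (l.map Subtype.val).prod)).subset ?_
    intro g hg
    obtain ⟨l, h1, h2, h3⟩ := hlen g
    refine ⟨l.attach.map (fun s => ⟨s.1, h1 s.1 s.2⟩), ?_, ?_⟩
    · simp only [Set.mem_setOf_eq] at hg; simpa [h3] using hg
    · simp [List.map_map, Function.comp_def, h2]

/-- A path from `u` to `v` on which `F` is not constant comes close to the identity. -/
theorem crossing {G β : Type*} [Group G] (S : Set G) (len : G → ℕ) (K : ℕ) (F : G → β)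
    (hF : ∀ g, ∀ s ∈ S, F g ≠ F (g * s) → len g ≤ K) (l : List G) :
    (∀ s ∈ l, s ∈ S) → ∀ u, F u ≠ F (u * l.prod) →
      ∃ l1 l2, l = l1 ++ l2 ∧ len (u * l1.prod) ≤ K := by
  induction l with
  | nil => intro _ u hu; simp at hu
  | cons s l ih =>
    intro hs u hu
    by_cases h : F u = F (u * s)
    · obtain ⟨l1, l2, rfl, h2⟩ := ih (fun t ht => hs t (by simp [ht])) (u * s) (by
        rw [← h]; simpa [mul_assoc] using hu)
      exact ⟨s :: l1, l2, rfl, by simpa [mul_assoc] using h2⟩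
    · exact ⟨[], s :: l, rfl, by simpa using hF u s (hs s (by simp)) h⟩

/-- Quasi-centers of finite subgroups. -/
theorem quasi_center {G β : Type*} [Group G] (S : Set G) (len : G → ℕ) (K : ℕ) (F : G → β)
    (hone : len 1 = 0) (hmul : ∀ g h, len (g * h) ≤ len g + len h) (hinv : ∀ g, len g⁻¹ = len g)
    (hle : ∀ l : List G, (∀ s ∈ l, s ∈ S) → len l.prod ≤ l.length)
    (hlen : ∀ g, ∃ l : List G, (∀ s ∈ l, s ∈ S) ∧ l.prod = g ∧ l.length = len g)
    (hF : ∀ g, ∀ s ∈ S, F g ≠ F (g * s) → len g ≤ K)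
    (hpath : ∀ w, K < len w → ∃ (x : ℕ → G) (L : ℕ), x 0 = 1 ∧
      (∀ i, len ((x i)⁻¹ * x (i + 1)) ≤ K) ∧ len ((x L)⁻¹ * w) ≤ K ∧
      ∀ i, F (x i)⁻¹ ≠ F ((x i)⁻¹ * w))
    (H : Subgroup G) (hH : (H : Set G).Finite) :
    ∃ c : G, ∀ h ∈ H, len (c⁻¹ * h * c) ≤ 6 * K + 4 := by
  have hcross : ∀ u v, F u ≠ F v → len u + len v ≤ len (u⁻¹ * v) + 2 * K := by
    intro u v huv
    obtain ⟨l, h1, h2, h3⟩ := hlen (u⁻¹ * v)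
    obtain ⟨l1, l2, rfl, h5⟩ := crossing S len K F hF l h1 u (by rw [h2]; simpa using huv)
    have e1 := hle l1 (fun s hs => h1 s (by simp [hs]))
    have e2 := hle l2 (fun s hs => h1 s (by simp [hs]))
    have e3 := hmul (u * l1.prod) (l1.prod)⁻¹
    have e4 := hmul (u * l1.prod) l2.prod
    have e5 : u * l1.prod * l2.prod = v := by
      rw [mul_assoc, ← List.prod_append, h2]; group
    rw [hinv, mul_inv_cancel_right] at e3
    rw [e5] at e4
    simp only [List.length_append] at h3
    omega
  let T := hH.toFinset
  have hT : ∀ h, h ∈ T ↔ h ∈ H := fun h => by simp [T]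
  let R : G → ℕ := fun c => T.sup fun h => len (c⁻¹ * h)
  have hR : ∀ c, ∀ h ∈ H, len (c⁻¹ * h) ≤ R c := fun c h hh =>
    Finset.le_sup (f := fun h => len (c⁻¹ * h)) ((hT h).2 hh)
  obtain ⟨c, hc⟩ : ∃ c, ∀ c', R c ≤ R c' := by
    exact ⟨Function.argmin R, fun c' => Function.argmin_le R c'⟩
  refine ⟨c, fun h hh => ?_⟩
  by_contra hcon
  push Not at hcon
  set w := c⁻¹ * h * c with hw
  obtain ⟨x, L, hx0, hxs, hxL, hxF⟩ := hpath w (by omega)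
  have hexL : len w ≤ 2 * len (x L) := by
    have := hmul (x L) ((x L)⁻¹ * w)
    rw [mul_inv_cancel_left] at this
    omega
  classical
  have hex : ∃ i, len w ≤ 2 * len (x i) := ⟨L, hexL⟩
  obtain ⟨j, hj⟩ : ∃ j, Nat.find hex = j + 1 := by
    apply Nat.exists_eq_succ_of_ne_zero
    intro h0
    have := Nat.find_spec hex
    rw [h0, hx0, hone] at this
    omega
  have h1 : len w ≤ 2 * len (x (j + 1)) := hj ▸ Nat.find_spec hex
  have h2 : 2 * len (x j) < len w := by
    have := Nat.find_min hex (m := j) (by omega)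
    omega
  have h3 : len (x (j + 1)) ≤ len (x j) + K := by
    have := hmul (x j) ((x j)⁻¹ * x (j + 1))
    rw [mul_inv_cancel_left] at this
    have := hxs j
    omega
  have h4 : len w ≤ len (x (j + 1)) + len ((x (j + 1))⁻¹ * w) := by
    have := hmul (x (j + 1)) ((x (j + 1))⁻¹ * w)
    rwa [mul_inv_cancel_left] at this
  have hFx := hxF (j + 1)
  generalize x (j + 1) = z at *
  have hlt : R (c * z) < R c := by
    have hpos : 0 < R c := by
      rcases Nat.eq_zero_or_pos (R c) with h0 | h0
      · have e1 := hR c 1 H.one_mem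
        have e2 := hR c h hh
        have e3 := hmul (c⁻¹ * h) c
        have e4 := hinv c
        rw [mul_one] at e1
        rw [← hw] at e3
        omega
      · exact h0
    refine (Finset.sup_lt_iff (by simpa using hpos)).2 ?_
    intro y hy
    have hyH := (hT y).1 hy
    by_cases hy1 : F z⁻¹ = F ((c * z)⁻¹ * y)
    · have hy2 : F (z⁻¹ * w) ≠ F ((c * z)⁻¹ * y) := by rw [← hy1]; exact hFx.symm
      have e1 := hcross _ _ hy2
      have e2 : (z⁻¹ * w)⁻¹ * ((c * z)⁻¹ * y) = c⁻¹ * (h⁻¹ * y) := by rw [hw]; group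
      rw [e2] at e1
      have e3 := hR c (h⁻¹ * y) (H.mul_mem (H.inv_mem hh) hyH)
      omega
    · have e1 := hcross _ _ hy1
      have e2 : (z⁻¹)⁻¹ * ((c * z)⁻¹ * y) = c⁻¹ * y := by group
      rw [e2, hinv] at e1
      have e3 := hR c y hyH
      omega
  have := hc (c * z)
  omega

/-- Up to conjugacy, the finite subgroups of a finitely generated virtually free group
lie in a fixed finite set. -/
theorem finite_subgroups_bounded (G : Type*) [Group G] (hfg : Group.FG G)
    (hvf : VirtuallyFree G) :
    ∃ B : Set G, B.Finite ∧ ∀ H : Subgroup G, (H : Set G).Finite →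
      ∃ c : G, ∀ h ∈ H, c⁻¹ * h * c ∈ B := by
  obtain ⟨S, len, hS, hone, hmul, hinv, hball, hle, hlen⟩ := exists_length G hfg
  obtain ⟨N, hN, hFI, n, ⟨e⟩⟩ := vf_structure G hfg hvf
  have hfinq : Finite (G ⧸ N) := inferInstance
  classical
  let σ : G ⧸ N → G := fun q => if q = 1 then 1 else Quotient.out q
  have hσ1 : σ 1 = 1 := by simp [σ]
  have hσ : ∀ q : G ⧸ N, (σ q : G ⧸ N) = q := fun q => by
    by_cases h : q = 1
    · simp [σ, h]
    · simp only [σ, h, if_false]; exact QuotientGroup.out_eq' q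
  have hr : ∀ g : G, g * (σ (g : G ⧸ N))⁻¹ ∈ N := fun g => by
    rw [← QuotientGroup.eq_one_iff]
    simp [hσ]
  let r : G → FreeGroup (Fin n) := fun g => e.symm ⟨_, hr g⟩
  have hrg : ∀ g, (e (r g) : G) * σ g = g := fun g => by simp [r]
  have hr' : ∀ (a : FreeGroup (Fin n)) (g : G), r (e a * g) = a * r g := by
    intro a g
    apply e.injective
    apply Subtype.ext
    have h1 : ((((e a : G) * g : G)) : G ⧸ N) = g := by
      rw [QuotientGroup.mk_mul, (QuotientGroup.eq_one_iff (e a : G)).2 (e a).2, one_mul]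
    simp only [r, MulEquiv.apply_symm_apply, map_mul, Subgroup.coe_mul, h1, mul_assoc]
  let F : G → Option (Fin n × Bool) := fun g => (r g).toWord.head?
  have hPfin : {g : G | ∃ s ∈ S, F g ≠ F (g * s)}.Finite := by
    have hf1 : (Set.range fun p : (G ⧸ N) × S => (r (σ p.1 * p.2)).norm).Finite := by
      have : Finite S := hS
      exact Set.finite_range _
    obtain ⟨M, hM⟩ := hf1.bddAbove
    have hf2 : {a : FreeGroup (Fin n) | a.norm ≤ M}.Finite :=
      Set.Finite.of_finite_image (f := FreeGroup.toWord)
        ((List.finite_length_le (Fin n × Bool) M).subset (by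
          rintro _ ⟨a, ha, rfl⟩; exact ha)) FreeGroup.toWord_injective.injOn
    refine ((hf2.prod (Set.finite_univ (α := G ⧸ N))).image
      (fun p => (e p.1 : G) * σ p.2)).subset ?_
    rintro g ⟨s, hs, hgs⟩
    refine ⟨(r g, (g : G ⧸ N)), ⟨?_, trivial⟩, hrg g⟩
    have h1 := norm_le_of_head_ne _ _ hgs
    have h2 : r (g * s) = r g * r (σ g * s) := by
      rw [← hr', ← mul_assoc, hrg]
    rw [h2, inv_mul_cancel_left] at h1
    exact h1.trans (hM ⟨((g : G ⧸ N), ⟨s, hs⟩), rfl⟩)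
  have hbd : ∀ A : Set G, A.Finite → ∃ K, ∀ g ∈ A, len g ≤ K := by
    intro A hA
    obtain ⟨K, hK⟩ := (hA.image len).bddAbove
    exact ⟨K, fun g hg => hK ⟨g, hg, rfl⟩⟩
  obtain ⟨K1, hK1⟩ := hbd _ hPfin
  obtain ⟨K2, hK2⟩ := hbd _ (Set.finite_range fun p : Fin n × Bool => (e (FreeGroup.mk [p]) : G))
  obtain ⟨K3, hK3⟩ := hbd _ (Set.finite_range σ)
  refine ⟨{g | len g ≤ 6 * (K1 + K2 + K3) + 4}, hball _, fun H hH => ?_⟩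
  refine quasi_center S len (K1 + K2 + K3) F hone hmul hinv hle hlen ?_ ?_ H hH
  · intro g s hs hgs
    have := hK1 g ⟨s, hs, hgs⟩
    omega
  · intro w hw
    have hr1 : r w ≠ 1 := by
      intro h1
      have h2 := hrg w
      rw [h1, map_one, Subgroup.coe_one, one_mul] at h2
      have := hK3 _ ⟨(w : G ⧸ N), rfl⟩
      rw [h2] at this
      omega
    let p : ℕ → FreeGroup (Fin n) := fun i => FreeGroup.mk ((r w).toWord.take i)
    have hr11 : r 1 = 1 := by
      have := hrg 1
      rw [QuotientGroup.mk_one, hσ1, mul_one] at this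
      apply e.injective
      apply Subtype.ext
      simpa using this
    have hN1 : ∀ a : FreeGroup (Fin n), r (e a : G) = a := by
      intro a
      have := hr' a 1
      rwa [mul_one, hr11, mul_one] at this
    have hinvc : ∀ a : FreeGroup (Fin n), (e a : G)⁻¹ = e a⁻¹ := by intro a; simp
    refine ⟨fun i => e (p i), (r w).toWord.length, ?_, ?_, ?_, ?_⟩
    · simp [p, FreeGroup.one_eq_mk.symm]
    · intro i
      have h1 : (p i)⁻¹ * p (i + 1) = FreeGroup.mk ((r w).toWord[i]?).toList := by
        rw [inv_mul_eq_iff_eq_mul]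
        simp only [p]
        rw [FreeGroup.mul_mk, List.take_add_one]
      simp only
      rw [hinvc, ← Subgroup.coe_mul, ← map_mul, h1]
      cases h2 : (r w).toWord[i]? with
      | none => simp [FreeGroup.one_eq_mk.symm, hone]
      | some s =>
        have := hK2 (e (FreeGroup.mk [s]) : G) ⟨s, rfl⟩
        simp only [Option.toList_some]
        omega
    · have h1 : p (r w).toWord.length = r w := by simp [p, FreeGroup.mk_toWord]
      have h2 : (e (r w) : G)⁻¹ * w = σ w := by
        rw [inv_mul_eq_iff_eq_mul, hrg]
      simp only [h1, h2]
      have := hK3 _ ⟨(w : G ⧸ N), rfl⟩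
      omega
    · intro i
      simp only [F]
      rw [hinvc, hN1, hr']
      exact split_head_ne (r w) hr1 i

/-! ### The transfer argument -/

universe u v

/-- Terms of the language of groups computing products of lists. -/
def termOfList {α ι : Type*} (t : ι → groupLang.Term α) : List (ι × Bool) → groupLang.Term α
  | [] => Term.func GroupFunc.one ![]
  | (i, true) :: l => Term.func GroupFunc.mul ![t i, termOfList t l]
  | (i, false) :: l => Term.func GroupFunc.mul ![Term.func GroupFunc.inv ![t i], termOfList t l]

theorem realize_termOfList {α ι M : Type*} [Group M] (t : ι → groupLang.Term α) (v : α → M)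
    (l : List (ι × Bool)) :
    (termOfList t l).realize v =
      FreeGroup.lift (fun i => (t i).realize v) (FreeGroup.mk l) := by
  induction l with
  | nil => rfl
  | cons p l ih =>
    obtain ⟨i, b⟩ := p
    rw [FreeGroup.lift_mk] at ih ⊢
    cases b
    · simp only [List.map_cons, List.prod_cons, ← ih]; rfl
    · simp only [List.map_cons, List.prod_cons, ← ih]; rfl

theorem isQF_iSup {β : Type*} [Finite β] {α : Type*} {n : ℕ}
    (f : β → groupLang.BoundedFormula α n) (h : ∀ b, (f b).IsQF) :
    (BoundedFormula.iSup f).IsQF := by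
  let _ := Fintype.ofFinite β
  change BoundedFormula.IsQF (List.foldr _ _ (List.map f (Finset.univ : Finset β).toList))
  generalize (Finset.univ : Finset β).toList = l
  induction l with
  | nil => exact BoundedFormula.isQF_bot
  | cons a l ih => exact (h a).sup ih

theorem isQF_iInf {β : Type*} [Finite β] {α : Type*} {n : ℕ}
    (f : β → groupLang.BoundedFormula α n) (h : ∀ b, (f b).IsQF) :
    (BoundedFormula.iInf f).IsQF := by
  let _ := Fintype.ofFinite β
  change BoundedFormula.IsQF (List.foldr _ _ (List.map f (Finset.univ : Finset β).toList))
  generalize (Finset.univ : Finset β).toList = l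
  induction l with
  | nil => exact BoundedFormula.IsQF.top
  | cons a l ih => exact (h a).inf ih

theorem isAE_alls {n : ℕ} (φ : groupLang.BoundedFormula Empty n) (h : IsAE φ) :
    IsAE φ.alls := by
  induction n with
  | zero => exact h
  | succ n ih => exact ih _ (IsAE.all h)

/-- Equality of two words, as a formula in the variables `x₀, …, xₙ`. -/
noncomputable def wordEq {n : ℕ} (u v : FreeGroup (Fin n)) : groupLang.BoundedFormula Empty n :=
  (termOfList (fun i => Term.var (Sum.inr i)) u.toWord).bdEqual
    (termOfList (fun i => Term.var (Sum.inr i)) v.toWord)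

theorem isQF_wordEq {n : ℕ} (u v : FreeGroup (Fin n)) : (wordEq u v).IsQF :=
  (BoundedFormula.IsAtomic.equal _ _).isQF

theorem realize_wordEq {M : Type*} [Group M] {n : ℕ} (u v : FreeGroup (Fin n))
    (w : Empty → M) (x : Fin n → M) :
    (wordEq u v).Realize w x ↔ FreeGroup.lift x u = FreeGroup.lift x v := by
  simp [wordEq, realize_termOfList, FreeGroup.mk_toWord]

/-- The `∀∃` sentence saying that every solution of the system `R` conjugates one of the
tuples of pairs in the family `P`. -/
theorem exists_sentence {n : ℕ} (R : Set (FreeGroup (Fin n))) (hR : R.Finite)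
    {ι : Type*} [Finite ι] (κ : ι → Type*) [∀ i, Finite (κ i)]
    (P : ∀ i, κ i → FreeGroup (Fin n) × FreeGroup (Fin n)) :
    ∃ φ : groupLang.Sentence, IsAE φ ∧
      (∀ (M : Type u) [Group M], M ⊨ φ ↔ ∀ x : Fin n → M, ∃ g : M,
        (∃ w ∈ R, FreeGroup.lift x w ≠ 1) ∨
        (∃ i, ∀ k, g * FreeGroup.lift x (P i k).1 * g⁻¹ = FreeGroup.lift x (P i k).2)) ∧
      (∀ (M : Type v) [Group M], M ⊨ φ ↔ ∀ x : Fin n → M, ∃ g : M,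
        (∃ w ∈ R, FreeGroup.lift x w ≠ 1) ∨
        (∃ i, ∀ k, g * FreeGroup.lift x (P i k).1 * g⁻¹ = FreeGroup.lift x (P i k).2)) := by
  have : Finite R := hR
  let up : FreeGroup (Fin n) → FreeGroup (Fin (n + 1)) := FreeGroup.map Fin.castSucc
  let c : FreeGroup (Fin (n + 1)) := FreeGroup.of (Fin.last n)
  let θ : groupLang.BoundedFormula Empty (n + 1) :=
    BoundedFormula.iSup (fun w : R => (wordEq (up w) 1).not) ⊔
    BoundedFormula.iSup (fun i : ι => BoundedFormula.iInf
      (fun k : κ i => wordEq (c * up (P i k).1 * c⁻¹) (up (P i k).2)))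
  have hθ : θ.IsQF := (isQF_iSup _ fun w => (isQF_wordEq _ _).not).sup
    (isQF_iSup _ fun i => isQF_iInf _ fun k => isQF_wordEq _ _)
  refine ⟨θ.ex.alls, isAE_alls _ (IsAE.of_existential (.ex (.of_isQF hθ))), ?_, ?_⟩ <;>
  · intro M _
    have key : ∀ (x : Fin n → M) (g : M) (w : FreeGroup (Fin n)),
        FreeGroup.lift (Fin.snoc (α := fun _ => M) x g) (up w) = FreeGroup.lift x w := by
      intro x g w
      have : (FreeGroup.lift (Fin.snoc (α := fun _ => M) x g)).comp
          (FreeGroup.map Fin.castSucc) = FreeGroup.lift x := by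
        ext i; simp
      exact DFunLike.congr_fun this w
    simp only [Sentence.Realize, Formula.Realize]
    rw [← Formula.Realize, BoundedFormula.realize_alls]
    apply forall_congr'
    intro x
    simp only [θ, BoundedFormula.realize_ex, BoundedFormula.realize_sup,
      BoundedFormula.realize_iSup, BoundedFormula.realize_iInf, BoundedFormula.realize_not,
      realize_wordEq, map_mul, map_inv, map_one, key]
    simp [c]

/-- Transfer: `G` maps to `G'` without making finitely many non-conjugate tuples conjugate. -/
theorem transfer (G : Type u) (G' : Type v) [Group G] [Group G'] (hfg : Group.FG G)
    (hvf : VirtuallyFree G) (hae : AEEquivalent G G') (P : Set (Set (G × G))) (hP : P.Finite)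
    (hP' : ∀ L ∈ P, L.Finite) (hn : ∀ L ∈ P, ¬ ∃ g : G, ∀ q ∈ L, g * q.1 * g⁻¹ = q.2) :
    ∃ φ : G →* G', ∀ L ∈ P, ¬ ∃ g' : G', ∀ q ∈ L, g' * φ q.1 * g'⁻¹ = φ q.2 := by
  obtain ⟨n, a, R, hR, ha, hRa, hx⟩ := vf_presentation G G' hfg hvf
  choose W hW using ha
  have : Finite P := hP
  have : ∀ L : P, Finite L.1 := fun L => hP' L.1 L.2
  obtain ⟨φ, hφ, h1, h2⟩ := exists_sentence.{u, v} R hR (ι := P) (fun L => L.1)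
    (fun L q => (W q.1.1, W q.1.2))
  have hG : ¬ G ⊨ φ := by
    rw [h1 G]
    intro hall
    obtain ⟨g, ⟨w, hw, hw'⟩ | ⟨L, hL⟩⟩ := hall a
    · exact hw' (hRa w hw)
    · exact hn L.1 L.2 ⟨g, fun q hq => by simpa [hW] using hL ⟨q, hq⟩⟩
  rw [hae φ hφ, h2 G'] at hG
  push Not at hG
  obtain ⟨x, hx'⟩ := hG
  obtain ⟨ψ, hψ⟩ := hx x (hx' 1).1
  have hψ' : ∀ g, FreeGroup.lift x (W g) = ψ g := by
    intro g
    have h3 : FreeGroup.lift x = ψ.comp (FreeGroup.lift a) := by ext i; simp [hψ]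
    rw [h3, MonoidHom.comp_apply, hW]
  refine ⟨ψ, fun L hL => ?_⟩
  rintro ⟨g, hg⟩
  obtain ⟨k, hk⟩ := (hx' g).2 ⟨L, hL⟩
  apply hk
  simpa [hψ'] using hg k.1 k.2

/-! ### Conjugacy classes of homomorphisms -/

/-- Conjugacy of homomorphisms. -/
def conjSetoid (K : Type*) (G : Type*) [Group K] [Group G] : Setoid (K →* G) where
  r θ₁ θ₂ := ∃ g : G, ∀ k, g * θ₁ k * g⁻¹ = θ₂ k
  iseqv :=
    { refl := fun θ => ⟨1, by simp⟩
      symm := by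
        rintro θ₁ θ₂ ⟨g, hg⟩
        exact ⟨g⁻¹, fun k => by rw [← hg]; group⟩
      trans := by
        rintro θ₁ θ₂ θ₃ ⟨g, hg⟩ ⟨h, hh⟩
        exact ⟨h * g, fun k => by rw [← hh, ← hg]; group⟩ }

theorem conjSetoid_comp {K G : Type*} [Group K] [Group G] (p : G →* G) (θ₁ θ₂ : K →* G)
    (h : conjSetoid K G θ₁ θ₂) : conjSetoid K G (p.comp θ₁) (p.comp θ₂) := by
  obtain ⟨g, hg⟩ := h
  exact ⟨p g, fun k => by simp [← hg]⟩

theorem homPow_apply {G : Type*} [Group G] (p : G →* G) (n : ℕ) (g : G) :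
    homPow p n g = p^[n] g := by
  induction n with
  | zero => rfl
  | succ n ih => rw [Function.iterate_succ_apply', ← ih]; rfl

/-- Any homomorphism from a finite group is conjugate to one with values in the bounded set. -/
theorem exists_conj_bounded {K G : Type*} [Group K] [Group G] [Finite K] (B : Set G)
    (hB : ∀ H : Subgroup G, (H : Set G).Finite → ∃ c : G, ∀ h ∈ H, c⁻¹ * h * c ∈ B)
    (θ : K →* G) : ∃ θ' : K →* G, conjSetoid K G θ θ' ∧ ∀ k, θ' k ∈ B := by
  obtain ⟨c, hc⟩ := hB θ.range (by rw [MonoidHom.coe_range]; exact Set.finite_range θ)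
  refine ⟨(MulAut.conj c⁻¹).toMonoidHom.comp θ, ⟨c⁻¹, fun k => ?_⟩, fun k => ?_⟩
  · simp
  · simpa using hc (θ k) ⟨k, rfl⟩

/-- An endomorphism that is injective on conjugacy classes has a power equivalent to the
identity. -/
theorem exists_pow_equiv {G : Type*} [Group G] (B : Set G) (hBfin : B.Finite)
    (hB : ∀ H : Subgroup G, (H : Set G).Finite → ∃ c : G, ∀ h ∈ H, c⁻¹ * h * c ∈ B)
    (p : G →* G)
    (hp : ∀ H : Subgroup G, (H : Set G) ⊆ B → ∀ θ₁ θ₂ : H →* G,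
      conjSetoid H G (p.comp θ₁) (p.comp θ₂) → conjSetoid H G θ₁ θ₂) :
    ClassPermuting p := by
  let I := {H : Subgroup G // (H : Set G) ⊆ B}
  have hI : Finite I := by
    have h1 : Finite {A : Set G // A ⊆ B} := hBfin.finite_subsets
    exact Finite.of_injective (fun H : I => (⟨(H.1 : Set G), H.2⟩ : {A : Set G // A ⊆ B}))
      (fun H H' h => Subtype.ext (SetLike.coe_injective (congrArg Subtype.val h)))
  have hfin : ∀ H : I, Finite H.1 := fun H => hBfin.subset H.2
  have hQ : ∀ H : I, Finite (Quotient (conjSetoid H.1 G)) := by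
    intro H
    have := hfin H
    have : Finite B := hBfin
    have h1 : Finite {θ : H.1 →* G // ∀ k, θ k ∈ B} :=
      Finite.of_injective (fun θ => fun k => (⟨θ.1 k, θ.2 k⟩ : B)) (fun θ θ' h => by
        apply Subtype.ext; ext k
        exact congrArg Subtype.val (congrFun h k))
    refine Finite.of_surjective
      (fun θ : {θ : H.1 →* G // ∀ k, θ k ∈ B} => (Quotient.mk (conjSetoid H.1 G) θ.1)) ?_
    intro q
    induction q using Quotient.inductionOn with
    | h θ =>
      obtain ⟨θ', h1, h2⟩ := exists_conj_bounded B hB θ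
      exact ⟨⟨θ', h2⟩, Quotient.sound ((conjSetoid _ _).symm h1)⟩
  let Q := ∀ H : I, Quotient (conjSetoid H.1 G)
  have hQfin : Finite Q := inferInstance
  let f : Q → Q := fun q H =>
    Quotient.map (p.comp ·) (fun θ₁ θ₂ h => conjSetoid_comp p θ₁ θ₂ h) (q H)
  have hf : Function.Injective f := by
    intro q q' h
    funext H
    have h1 := congrFun h H
    simp only [f] at h1
    generalize q H = a at h1
    generalize q' H = b at h1
    induction a using Quotient.inductionOn with
    | h θ₁ =>
      induction b using Quotient.inductionOn with
      | h θ₂ =>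
        simp only [Quotient.map_mk] at h1
        exact Quotient.sound (hp H.1 H.2 θ₁ θ₂ (Quotient.exact h1))
  let x : Q := fun H => Quotient.mk _ H.1.subtype
  have hiter : ∀ n, f^[n] x = fun H => Quotient.mk _ ((homPow p n).comp H.1.subtype) := by
    intro n
    induction n with
    | zero => rfl
    | succ n ih => rw [Function.iterate_succ_apply', ih]; rfl
  obtain ⟨n, hn, hper⟩ : ∃ n, 1 ≤ n ∧ f^[n] x = x := by
    obtain ⟨i, j, hij, h⟩ := Finite.exists_ne_map_eq_of_infinite (fun n => f^[n] x)
    wlog hlt : i < j generalizing i j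
    · exact this j i hij.symm h.symm (by omega)
    refine ⟨j - i, by omega, ?_⟩
    apply hf.iterate i
    rw [← Function.iterate_add_apply, Nat.add_sub_cancel' hlt.le]
    exact h.symm
  refine ⟨n, hn, ?_⟩
  rw [hiter] at hper
  intro H hH
  obtain ⟨c, hc⟩ := hB H hH
  let H' : Subgroup G := H.map (MulAut.conj c⁻¹).toMonoidHom
  have hH' : (H' : Set G) ⊆ B := by
    rintro _ ⟨h, hh, rfl⟩
    simpa using hc h hh
  obtain ⟨g, hg⟩ := Quotient.exact (congrFun hper ⟨H', hH'⟩)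
  refine ⟨c * g * (homPow p n c)⁻¹, fun h hh => ?_⟩
  have h1 := hg ⟨c⁻¹ * h * c, ⟨h, hh, by simp⟩⟩
  simp only [MonoidHom.comp_apply, Subgroup.subtype_apply, map_mul, map_inv] at h1
  simp only [MonoidHom.id_apply]
  have h2 : h = c * (c⁻¹ * h * c) * c⁻¹ := by group
  rw [← h1] at h2
  refine h2.trans ?_
  group

/-- If `G` is a rigid finitely generated virtually free group, `G'` is a finitely
generated virtually free group and `G` and `G'` are ∀∃-equivalent, then `G`
embeds into `G'`. -/
theorem rigid_aeEquivalent_embeds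
    (G : Type*) (G' : Type*) [Group G] [Group G']
    (hfg : Group.FG G) (hfg' : Group.FG G')
    (hvf : VirtuallyFree G) (hvf' : VirtuallyFree G')
    (hrigid : Rigid G) (hae : AEEquivalent G G') :
    ∃ ψ : G →* G', Function.Injective ψ := by
  obtain ⟨B, hBfin, hB⟩ := finite_subgroups_bounded G hfg hvf
  let P : Set (Set (G × G)) := {L | ∃ (H : Subgroup G) (θ₁ θ₂ : H →* G), (H : Set G) ⊆ B ∧
    (∀ k, θ₁ k ∈ B) ∧ (∀ k, θ₂ k ∈ B) ∧ ¬ conjSetoid H G θ₁ θ₂ ∧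
    L = Set.range fun k => (θ₁ k, θ₂ k)}
  have hsub : ∀ L ∈ P, L ⊆ B ×ˢ B := by
    rintro _ ⟨H, θ₁, θ₂, -, h1, h2, -, rfl⟩ _ ⟨k, rfl⟩
    exact ⟨h1 k, h2 k⟩
  have hBB : (B ×ˢ B).Finite := hBfin.prod hBfin
  have hPfin : P.Finite := hBB.finite_subsets.subset hsub
  have hP' : ∀ L ∈ P, L.Finite := fun L hL => hBB.subset (hsub L hL)
  obtain ⟨φ, hφ⟩ := transfer G G' hfg hvf hae P hPfin hP' (by
    rintro _ ⟨H, θ₁, θ₂, -, -, -, h3, rfl⟩ ⟨g, hg⟩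
    exact h3 ⟨g, fun k => hg _ ⟨k, rfl⟩⟩)
  obtain ⟨ψ, hψ⟩ := transfer G' G hfg' hvf' (fun s hs => (hae s hs).symm)
    ((fun L => Prod.map φ φ '' L) '' P) (hPfin.image _) (by
      rintro _ ⟨L, hL, rfl⟩
      exact (hP' L hL).image _) (by
      rintro _ ⟨L, hL, rfl⟩ ⟨g, hg⟩
      exact hφ L hL ⟨g, fun q hq => hg _ ⟨q, hq, rfl⟩⟩)
  obtain ⟨n, hn, hequiv⟩ := exists_pow_equiv B hBfin hB (ψ.comp φ) (by
    intro H hH θ₁ θ₂ h12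
    have hfin : Finite H := hBfin.subset hH
    obtain ⟨θ₁', h1, h1'⟩ := exists_conj_bounded B hB θ₁
    obtain ⟨θ₂', h2, h2'⟩ := exists_conj_bounded B hB θ₂
    by_contra hcon
    have hcon' : ¬ conjSetoid H G θ₁' θ₂' := fun h =>
      hcon ((conjSetoid H G).trans h1 ((conjSetoid H G).trans h ((conjSetoid H G).symm h2)))
    have h3 : conjSetoid H G ((ψ.comp φ).comp θ₁') ((ψ.comp φ).comp θ₂') :=
      (conjSetoid H G).trans ((conjSetoid H G).symm (conjSetoid_comp _ _ _ h1))
        ((conjSetoid H G).trans h12 (conjSetoid_comp _ _ _ h2))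
    obtain ⟨g, hg⟩ := h3
    refine hψ _ ⟨_, ⟨H, θ₁', θ₂', hH, h1', h2', hcon', rfl⟩, rfl⟩ ⟨g, ?_⟩
    rintro _ ⟨_, ⟨k, rfl⟩, rfl⟩
    exact hg k)
  have hbij := hrigid _ hequiv
  refine ⟨φ, fun a b hab => hbij.1 ?_⟩
  obtain ⟨m, rfl⟩ : ∃ m, n = m + 1 := ⟨n - 1, by omega⟩
  rw [homPow_apply, homPow_apply, Function.iterate_succ_apply, Function.iterate_succ_apply,
    MonoidHom.comp_apply, MonoidHom.comp_apply, hab]
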